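/- Suppose q satisfies condition A for x ≥ 0, with ρ(x)=Re p(x) − (1/2)|p′(x)/p(x)|. Then every function y such that y and y′ are locally absolutely continuous on ℝ₊, y ∈ L₂(ℝ₊), and −y″+qy ∈ L₂(ℝ₊) (i.e., every y in the maximal domain D) satisfies y ∈ L₂(ℝ₊, ρ) and y′ ∈ L₂(ℝ₊, ρ/|q|): ∫₀^∞ ρ(x)|y(x)|² dx < ∞ and ∫₀^∞ (ρ(x)/|q(x)|)|y′(x)|² dx < ∞. -/

import Mathlib

/-!
Write `p = √q`, `f = -y'' + q y` and `z = y'/p`, so that `|z|² = |y'|²/|q|`. Then `g = Re (z ȳ)`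
satisfies

  `g' = Re p (|y|² + |z|²) - Re ((p'/p) z ȳ) - Re (f ȳ / p) ≥ ρ (|y|² + |z|²) - e`,

where `e = (|f|² + |y|²)/(2C)` is integrable (`energy_ineq`). With `w = ρ (|y|² + |z|²)` and
`K = -g(0) + ∫ e`, integration gives `J(x) := ∫₀ˣ w - K ≤ g(x) ≤ |y(x)| |z(x)|`.

It remains to show `J ≤ 0`, since then `w` is integrable and dominates both integrands. The growth
of `g` alone does not rule out `J > 0`, because `y` may be small where `z` is large. However
`J' = w ≥ C |z|²`, so `C J² ≤ |y|² J'` wherever `J > 0`. If `J(X) > 0` at some `X`, the inequality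
`2 ≤ |y|² + J'/(C J²)` holds on `[X, ∞)`; the right-hand side has bounded integrals there,
because `|y|²` is integrable and `J'/J²` is the derivative of `-1/J`. This is a contradiction
(`integral_le_of_riccati`).

The integrations are instances of the fundamental theorem of calculus for absolutely continuous
functions. Absolute continuity of the functions built from `q`, `y` and `y'` is transported by
comparing increments (`ac_of_dist_le`).
-/

open MeasureTheory Filter Topology Complex

noncomputable section

/-- The open sector `Π_κ = {z ≠ 0 : arg z ∈ (-π+κ, π-κ)}`. -/
def PiSector (κ : ℝ) : Set ℂ :=
  {z : ℂ | z ≠ 0 ∧ -Real.pi + κ < z.arg ∧ z.arg < Real.pi - κ}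

/-- `f` is locally absolutely continuous on `[a,∞)` with a.e. derivative `f'`:
`f'` is locally integrable there and `f` is recovered from `f'` by integration. -/
def LocACOn (f f' : ℝ → ℂ) (a : ℝ) : Prop :=
  (∀ b, a ≤ b → IntervalIntegrable f' volume a b) ∧
  ∀ x, a ≤ x → f x = f a + ∫ t in a..x, f' t

/-- `y` (with first derivative `y'`) is a solution of `-y'' + q y = f` on `ℝ₊`:
`y, y'` are locally absolutely continuous on `[0,∞)` and the a.e. derivative of
`y'` equals `q y - f`. -/
def IsSol (q f y y' : ℝ → ℂ) : Prop :=
  LocACOn y y' 0 ∧ LocACOn y' (fun x => q x * y x - f x) 0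

/-- `y` is nontrivial on `ℝ₊`. -/
def NontrivialSol (y : ℝ → ℂ) : Prop := ∃ x, 0 ≤ x ∧ y x ≠ 0

/-- membership in the weighted space `L₂(ℝ₊, w)`. -/
def MemL2 (w : ℝ → ℝ) (f : ℝ → ℂ) : Prop :=
  AEStronglyMeasurable f (volume.restrict (Set.Ici (0:ℝ))) ∧
  IntegrableOn (fun x => w x * ‖f x‖ ^ 2) (Set.Ici (0:ℝ)) volume

/-- the branch `p = √q` with positive real part (principal branch). -/
def sqrtQ (q : ℝ → ℂ) (x : ℝ) : ℂ := (q x) ^ ((1 : ℂ) / 2)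

/-- the a.e. derivative of `sqrtQ q`, where `q'` is the a.e. derivative of `q`. -/
def sqrtQD (q q' : ℝ → ℂ) (x : ℝ) : ℂ := q' x / (2 * sqrtQ q x)

/-- the weight `ρ = Re p - (1/2)|p'/p|`. -/
def rho (q q' : ℝ → ℂ) (x : ℝ) : ℝ :=
  (sqrtQ q x).re - (1 / 2) * ‖sqrtQD q q' x / sqrtQ q x‖

/-- Condition A for `q` on `[x₀,∞)` with constant `C`, where `q'` is the
a.e. derivative of `q`: `q ∈ L¹loc(ℝ₊)`, `q` is locally absolutely continuous
on `[x₀,∞)`, `q` takes values in a sector `Π_κ` on `[x₀,∞)`, the branch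
`p = √q` has positive real part there, and
`Re p ≥ C + (1/2)|p'/p|` a.e. on `[x₀,∞)`. -/
def CondA (q q' : ℝ → ℂ) (x₀ C : ℝ) : Prop :=
  LocallyIntegrableOn q (Set.Ici (0:ℝ)) volume ∧
  LocACOn q q' x₀ ∧
  (∃ κ, 0 ≤ κ ∧ ∀ x, x₀ ≤ x → q x ∈ PiSector κ) ∧
  (∀ x, x₀ ≤ x → 0 < (sqrtQ q x).re) ∧
  0 < C ∧
  ∀ᵐ x : ℝ, x₀ ≤ x → C + (1 / 2) * ‖sqrtQD q q' x / sqrtQ q x‖ ≤ (sqrtQ q x).re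

/-- The set `𝒩` of spectral parameters `lam` such that `q - lam` satisfies
condition A for `x ≥ x₁(lam)` for some `x₁(lam) ≥ 0` (note `(q - lam)' = q'`). -/
def NSet (q q' : ℝ → ℂ) : Set ℂ :=
  {lam : ℂ | ∃ x₁ C, 0 ≤ x₁ ∧ CondA (fun x => q x - lam) q' x₁ C}

/-- A function whose increments on `[a, b]` are dominated by those of an absolutely continuous
function is absolutely continuous. -/
lemma ac_of_dist_le {X Y : Type*} [PseudoMetricSpace X] [PseudoMetricSpace Y]
    {f : ℝ → X} {g : ℝ → Y} {a b K : ℝ} (hg : AbsolutelyContinuousOnInterval g a b)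
    (h : ∀ s ∈ Set.uIcc a b, ∀ t ∈ Set.uIcc a b, dist (f s) (f t) ≤ K * dist (g s) (g t)) :
    AbsolutelyContinuousOnInterval f a b := by
  unfold AbsolutelyContinuousOnInterval at hg ⊢
  have hK := hg.const_mul K
  rw [mul_zero] at hK
  refine squeeze_zero' (Eventually.of_forall fun E => Finset.sum_nonneg fun i _ => dist_nonneg)
    ?_ hK
  have : ∀ᶠ E in (AbsolutelyContinuousOnInterval.totalLengthFilter ⊓
      𝓟 (AbsolutelyContinuousOnInterval.disjWithin a b)),
      E ∈ AbsolutelyContinuousOnInterval.disjWithin a b :=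
    mem_inf_of_right (mem_principal_self _)
  filter_upwards [this] with E hE
  rw [Finset.mul_sum]
  exact Finset.sum_le_sum fun i hi => h _ (hE.1 i hi).1 _ (hE.1 i hi).2

/-- The indefinite integral of a complex integrable function is absolutely continuous; this follows
from the real case applied to the real and imaginary parts. -/
lemma ac_integral_complex {f : ℝ → ℂ} {a b : ℝ} (h : IntervalIntegrable f volume a b) :
    AbsolutelyContinuousOnInterval (fun x => ∫ t in a..x, f t) a b := by
  have hre : IntervalIntegrable (fun t => (f t).re) volume a b := ⟨h.1.re, h.2.re⟩
  have him : IntervalIntegrable (fun t => (f t).im) volume a b := ⟨h.1.im, h.2.im⟩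
  have h1 := hre.absolutelyContinuousOnInterval_intervalIntegral (c := a) (by simp)
  have h2 := him.absolutelyContinuousOnInterval_intervalIntegral (c := a) (by simp)
  have h1' : AbsolutelyContinuousOnInterval
      (fun x => ((∫ t in a..x, (f t).re : ℝ) : ℂ)) a b :=
    ac_of_dist_le (K := 1) h1 fun s _ t _ => by
      rw [Complex.dist_eq, ← ofReal_sub, norm_real, one_mul, Real.dist_eq, Real.norm_eq_abs]
  have h2' : AbsolutelyContinuousOnInterval
      (fun x => ((∫ t in a..x, (f t).im : ℝ) : ℂ)) a b :=
    ac_of_dist_le (K := 1) h2 fun s _ t _ => by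
      rw [Complex.dist_eq, ← ofReal_sub, norm_real, one_mul, Real.dist_eq, Real.norm_eq_abs]
  refine ac_of_dist_le (K := 1) (h1'.fun_add (h2'.const_smul Complex.I)) fun s hs t ht => ?_
  have key : ∀ x ∈ Set.uIcc a b, ∫ t in a..x, f t =
      ((∫ t in a..x, (f t).re : ℝ) : ℂ) + Complex.I • ((∫ t in a..x, (f t).im : ℝ) : ℂ) := by
    intro x hx
    have hfx : IntervalIntegrable f volume a x :=
      h.mono_set (Set.uIcc_subset_uIcc_left hx)
    have e1 := Complex.reCLM.intervalIntegral_comp_comm hfx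
    have e2 := Complex.imCLM.intervalIntegral_comp_comm hfx
    simp only [reCLM_apply, imCLM_apply] at e1 e2
    rw [e1, e2, smul_eq_mul, mul_comm]
    exact (Complex.re_add_im _).symm
  rw [key s hs, key t ht, one_mul]

lemma LocACOn.ac {f f' : ℝ → ℂ} (h : LocACOn f f' 0) {b : ℝ} (hb : 0 ≤ b) :
    AbsolutelyContinuousOnInterval f 0 b := by
  refine ac_of_dist_le (K := 1) (ac_integral_complex (h.1 b hb)) fun s hs t ht => ?_
  rw [Set.uIcc_of_le hb] at hs ht
  rw [h.2 s hs.1, h.2 t ht.1, dist_add_left, one_mul]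

lemma LocACOn.continuousOn {f f' : ℝ → ℂ} (h : LocACOn f f' 0) :
    ContinuousOn f (Set.Ici 0) := by
  intro x hx
  have hx : 0 ≤ x := hx
  have h1 := (h.ac (b := x + 1) (by linarith)).continuousOn x
    (by rw [Set.uIcc_of_le (by linarith)]; exact ⟨hx, by linarith⟩)
  refine h1.mono_of_mem_nhdsWithin ?_
  rw [Set.uIcc_of_le (by linarith), ← Set.Ici_inter_Iic]
  exact inter_mem self_mem_nhdsWithin (mem_nhdsWithin_of_mem_nhds (Iic_mem_nhds (by linarith)))

lemma LocACOn.ae_hasDerivAt {f f' : ℝ → ℂ} (h : LocACOn f f' 0) {b : ℝ} (hb : 0 ≤ b) :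
    ∀ᵐ x : ℝ, x ∈ Set.Ioo 0 b → HasDerivAt f (f' x) x := by
  filter_upwards [(h.1 b hb).ae_hasDerivAt_integral] with x hx hxm
  have hm : x ∈ Set.uIcc 0 b := by rw [Set.uIcc_of_le hb]; exact ⟨hxm.1.le, hxm.2.le⟩
  have h1 := (hx hm 0 (by simp)).const_add (f 0)
  refine h1.congr_of_eventuallyEq ?_
  filter_upwards [Ioo_mem_nhds hxm.1 hxm.2] with t ht
  exact h.2 t ht.1.le

/-- If `J = ∫₀ˣ w - K` satisfies `C J² ≤ u J'` wherever it is positive, with `u ≥ 0` integrable on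
the half-line, then `J` is never positive: otherwise `2 ≤ u + J'/(C J²)` from some point `X` on, and
integrating over `[X, X + L]` gives `2 L ≤ ∫ u + 1/(C J(X))` for every `L`. -/
lemma integral_le_of_riccati {w u : ℝ → ℝ} {K C : ℝ} (hC : 0 < C)
    (hw : ∀ b, 0 ≤ b → IntervalIntegrable w volume 0 b)
    (hw0 : ∀ᵐ x : ℝ, 0 ≤ x → 0 ≤ w x)
    (hu : IntegrableOn u (Set.Ici 0) volume) (hu0 : ∀ x, 0 ≤ u x)
    (h : ∀ᵐ x : ℝ, 0 ≤ x → 0 < (∫ t in (0:ℝ)..x, w t) - K →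
      C * ((∫ t in (0:ℝ)..x, w t) - K) ^ 2 ≤ u x * w x)
    (X : ℝ) (hX : 0 ≤ X) : ∫ t in (0:ℝ)..X, w t ≤ K := by
  by_contra! hneg
  set J : ℝ → ℝ := fun x => (∫ t in (0:ℝ)..x, w t) - K with hJ
  have hJX : 0 < J X := by simp only [hJ]; linarith
  have hJmono : ∀ x, X ≤ x → J X ≤ J x := by
    intro x hx
    have hi : IntervalIntegrable w volume X x := (hw X hX).symm.trans (hw x (hX.trans hx))
    have := intervalIntegral.integral_interval_sub_left (hw x (hX.trans hx)) (hw X hX)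
    have h0 : 0 ≤ ∫ t in X..x, w t :=
      intervalIntegral.integral_nonneg_of_ae_restrict hx (by
        rw [Filter.EventuallyLE, ae_restrict_iff' measurableSet_Icc]
        filter_upwards [hw0] with t ht htm using ht (hX.trans htm.1))
    simp only [hJ]; linarith
  set M := ∫ t in Set.Ici (0:ℝ), u t with hM
  have hM0 : 0 ≤ M := integral_nonneg hu0
  set L := M + 1 / (C * J X) + 1 with hL
  have hq : 0 < 1 / (C * J X) := by positivity
  have hL0 : 0 < L := by linarith
  have hXL : X ≤ X + L := by linarith
  have hX0 : 0 ≤ X + L := by linarith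
  have hJac : AbsolutelyContinuousOnInterval J X (X + L) := by
    refine ac_of_dist_le (K := 1) (((hw (X + L) hX0).absolutelyContinuousOnInterval_intervalIntegral
      (c := 0) (by simp)).mono ?_) fun s _ t _ => ?_
    · rw [Set.uIcc_of_le hXL, Set.uIcc_of_le hX0]
      exact Set.Icc_subset_Icc_left hX
    · simp [hJ]
  have hinv : AbsolutelyContinuousOnInterval (fun x => (J x)⁻¹) X (X + L) := by
    refine ac_of_dist_le (K := 1 / (J X) ^ 2) hJac fun s hs t ht => ?_
    rw [Set.uIcc_of_le hXL] at hs ht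
    have h1 := hJmono s hs.1
    have h2 := hJmono t ht.1
    rw [Real.dist_eq, Real.dist_eq, inv_sub_inv (by linarith) (by linarith), abs_div,
      abs_sub_comm, div_eq_mul_inv, mul_comm, ← one_div]
    gcongr
    rw [abs_of_nonneg (mul_nonneg (by linarith) (by linarith)), sq]
    gcongr
    linarith
  have hFTC := hinv.integral_deriv_eq_sub
  have hder := (hw (X + L) hX0).ae_hasDerivAt_integral
  have hui : IntervalIntegrable u volume X (X + L) := by
    rw [intervalIntegrable_iff_integrableOn_Ioc_of_le hXL]
    exact hu.mono_set fun t ht => hX.trans ht.1.le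
  have hdi := hinv.intervalIntegrable_deriv
  have hpt : ∀ᵐ x : ℝ, x ∈ Set.Icc X (X + L) →
      2 ≤ u x - C⁻¹ * deriv (fun x => (J x)⁻¹) x := by
    filter_upwards [hder, hw0, h] with x hdx hwx hx hxm
    have hx0 : 0 ≤ x := hX.trans hxm.1
    have hJx : 0 < J x := hJX.trans_le (hJmono x hxm.1)
    have hd : HasDerivAt J (w x) x :=
      (hdx (by rw [Set.uIcc_of_le hX0]; exact ⟨hx0, hxm.2⟩) 0 (by simp)).sub_const K
    rw [(hd.fun_inv hJx.ne').deriv]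
    have hineq : C * J x ^ 2 ≤ u x * w x := hx hx0 hJx
    have hCJ : 0 < C * J x ^ 2 := by positivity
    set T := w x / (C * J x ^ 2) with hT
    have hT0 : 0 ≤ T := div_nonneg (hwx hx0) hCJ.le
    have h1 : 1 ≤ u x * T := by
      rw [hT, ← mul_div_assoc, le_div_iff₀ hCJ]; linarith
    have h2 : u x - C⁻¹ * (-w x / J x ^ 2) = u x + T := by
      rw [hT]; field_simp; ring
    rw [h2]
    nlinarith [hu0 x, sq_nonneg (u x - T)]
  have hint : ∫ _ in X..(X + L), (2:ℝ) ≤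
      ∫ x in X..(X + L), (u x - C⁻¹ * deriv (fun x => (J x)⁻¹) x) := by
    refine intervalIntegral.integral_mono_ae_restrict hXL (by simp)
      (hui.sub (hdi.const_mul _)) ?_
    rw [Filter.EventuallyLE, ae_restrict_iff' measurableSet_Icc]
    exact hpt
  rw [intervalIntegral.integral_sub hui (hdi.const_mul _), intervalIntegral.integral_const_mul,
    hFTC] at hint
  have huM : ∫ x in X..(X + L), u x ≤ M := by
    rw [intervalIntegral.integral_of_le hXL]
    exact setIntegral_mono_set hu (Eventually.of_forall hu0)
      (LE.le.eventuallyLE fun t (ht : t ∈ Set.Ioc X (X + L)) => hX.trans ht.1.le)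
  have hpos : 0 < (J (X + L))⁻¹ := inv_pos.2 (hJX.trans_le (hJmono _ hXL))
  have hfin : -(C⁻¹ * ((J (X + L))⁻¹ - (J X)⁻¹)) ≤ 1 / (C * J X) := by
    have : 1 / (C * J X) = C⁻¹ * (J X)⁻¹ := by rw [one_div, mul_inv]
    rw [this]
    have : 0 < C⁻¹ * (J (X + L))⁻¹ := by positivity
    linarith
  simp only [intervalIntegral.integral_const, add_sub_cancel_left, smul_eq_mul] at hint
  linarith

lemma sqrtQ_sq (q : ℝ → ℂ) (x : ℝ) : sqrtQ q x ^ 2 = q x := by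
  unfold sqrtQ
  rw [← Complex.cpow_nat_mul]
  simp

lemma hasDerivAt_sqrtQ {q q' : ℝ → ℂ} {x : ℝ} (hx : q x ∈ slitPlane)
    (h : HasDerivAt q (q' x) x) : HasDerivAt (sqrtQ q) (sqrtQD q q' x) x := by
  have h0 : q x ≠ 0 := slitPlane_ne_zero hx
  have h1 : HasDerivAt (fun z : ℂ => z ^ ((1:ℂ) / 2)) ((1:ℂ) / 2 * (q x) ^ ((1:ℂ) / 2 - 1)) (q x) := by
    simpa using (hasDerivAt_id (q x)).cpow_const (c := (1:ℂ) / 2) hx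
  have h2 := h1.comp x h
  refine h2.congr_deriv ?_
  unfold sqrtQD
  have hs := sqrtQ_sq q x
  have hp0 : sqrtQ q x ≠ 0 := by
    intro hz; rw [hz] at hs; exact h0 (by rw [← hs]; simp)
  rw [cpow_sub _ _ h0, cpow_one]
  change 1 / 2 * (sqrtQ q x / q x) * q' x = _
  rw [← hs]
  field_simp

/-- The energy inequality. With `a = y`, `a' = y' = p z`, `a'' = y''` and `d = p'`, the first
term on the right is the derivative of `Re (z ȳ)` for
`y'' = p² y - f`, which equals `Re p (|y|² + |z|²) - Re ((d/p) z ȳ) - Re (f ȳ / p)`. -/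
lemma energy_ineq {C : ℝ} (hC : 0 < C) {p d a a' a'' : ℂ} (hp : C ≤ p.re) :
    (p.re - 1 / 2 * ‖d / p‖) * (‖a‖ ^ 2 + ‖a'‖ ^ 2 / ‖p ^ 2‖) ≤
      ((a'' * p⁻¹ + a' * (-d / p ^ 2)) * star a + a' * p⁻¹ * star a').re +
        (1 / (2 * C)) * (‖-a'' + p ^ 2 * a‖ ^ 2 + ‖a‖ ^ 2) := by
  have hp0 : p ≠ 0 := by rintro rfl; simp at hp; linarith
  obtain ⟨z, rfl⟩ : ∃ z, a' = p * z := ⟨a' / p, by field_simp⟩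
  set f := -a'' + p ^ 2 * a with hf
  have ha'' : a'' = p ^ 2 * a - f := by rw [hf]; ring
  have hpn : 0 < ‖p‖ := norm_pos_iff.2 hp0
  have e1 : ‖p * z‖ ^ 2 / ‖p ^ 2‖ = ‖z‖ ^ 2 := by
    rw [norm_mul, norm_pow]; field_simp
  have e2 : (a'' * p⁻¹ + p * z * (-d / p ^ 2)) * star a + p * z * p⁻¹ * star (p * z) =
      p * (a * star a) + star p * (z * star z) - d / p * (z * star a) - f * star a / p := by
    rw [ha'', star_mul']; field_simp; ring
  have e3 : ∀ w : ℂ, w * star w = ((‖w‖ ^ 2 : ℝ) : ℂ) := by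
    intro w; rw [Complex.star_def, Complex.mul_conj, Complex.normSq_eq_norm_sq]
  have b1 : (d / p * (z * star a)).re ≤ 1 / 2 * ‖d / p‖ * (‖a‖ ^ 2 + ‖z‖ ^ 2) := by
    refine (Complex.re_le_norm _).trans ?_
    rw [norm_mul, norm_mul, norm_star]
    nlinarith [norm_nonneg (d / p), mul_nonneg (norm_nonneg (d / p)) (sq_nonneg (‖a‖ - ‖z‖))]
  have b2 : (f * star a / p).re ≤ 1 / (2 * C) * (‖f‖ ^ 2 + ‖a‖ ^ 2) := by
    refine (Complex.re_le_norm _).trans ?_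
    rw [norm_div, norm_mul, norm_star, div_le_iff₀ hpn]
    have hCp : C ≤ ‖p‖ := hp.trans (Complex.re_le_norm _)
    have h1 : (1:ℝ) / 2 ≤ 1 / (2 * C) * ‖p‖ := by
      rw [div_mul_eq_mul_div, one_mul, div_le_div_iff₀ (by norm_num) (by positivity)]
      linarith
    nlinarith [sq_nonneg (‖f‖ - ‖a‖), mul_le_mul_of_nonneg_right h1
      (by positivity : (0:ℝ) ≤ ‖f‖ ^ 2 + ‖a‖ ^ 2)]
  rw [e1, e2, e3, e3, sub_re, sub_re, add_re, re_mul_ofReal, re_mul_ofReal,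
    Complex.star_def, conj_re, ← Complex.star_def]
  linarith

/-- `√q` is absolutely continuous, because `|√a - √b| ≤ |a - b| / (Re √a + Re √b)`. -/
lemma ac_sqrtQ {q q' : ℝ → ℂ} (hq : LocACOn q q' 0) (hpc : ContinuousOn (sqrtQ q) (Set.Ici 0))
    (hre : ∀ x, 0 ≤ x → 0 < (sqrtQ q x).re) {b : ℝ} (hb : 0 ≤ b) :
    AbsolutelyContinuousOnInterval (sqrtQ q) 0 b := by
  have hc : ContinuousOn (fun x => (sqrtQ q x).re) (Set.Icc 0 b) :=
    Complex.continuous_re.comp_continuousOn (hpc.mono fun t ht => ht.1)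
  obtain ⟨x₁, hx₁, hmin⟩ := isCompact_Icc.exists_isMinOn (Set.nonempty_Icc.2 hb) hc
  set c := (sqrtQ q x₁).re
  have hc0 : 0 < c := hre x₁ hx₁.1
  refine ac_of_dist_le (K := 1 / (2 * c)) (hq.ac hb) fun s hs t ht => ?_
  rw [Set.uIcc_of_le hb] at hs ht
  have h1 : c ≤ (sqrtQ q s).re := hmin hs
  have h2 : c ≤ (sqrtQ q t).re := hmin ht
  have h3 : 2 * c ≤ ‖sqrtQ q s + sqrtQ q t‖ := by
    refine le_trans ?_ (Complex.re_le_norm _)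
    rw [add_re]; linarith
  rw [dist_eq_norm, dist_eq_norm, ← sqrtQ_sq q s, ← sqrtQ_sq q t, sq_sub_sq, norm_mul,
    div_mul_eq_mul_div, one_mul, le_div_iff₀ (by positivity), mul_comm]
  exact mul_le_mul_of_nonneg_right h3 (norm_nonneg _)

lemma ac_inv {p : ℝ → ℂ} {a b : ℝ} (hp : AbsolutelyContinuousOnInterval p a b)
    (h0 : ∀ x ∈ Set.uIcc a b, p x ≠ 0) :
    AbsolutelyContinuousOnInterval (fun x => (p x)⁻¹) a b := by
  have hc : ContinuousOn (fun x => (p x)⁻¹) (Set.uIcc a b) := hp.continuousOn.inv₀ h0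
  obtain ⟨B, hB⟩ := isCompact_uIcc.exists_bound_of_continuousOn hc
  refine ac_of_dist_le (K := B * B) hp fun s hs t ht => ?_
  have e : (p s)⁻¹ - (p t)⁻¹ = (p s)⁻¹ * (p t)⁻¹ * (p t - p s) := by
    have := h0 s hs; have := h0 t ht; field_simp
  rw [dist_eq_norm, dist_comm, dist_eq_norm, e, norm_mul, norm_mul]
  gcongr
  · exact (norm_nonneg _).trans (hB s hs)
  · exact hB s hs
  · exact hB t ht

lemma integrableOn_of_dominated {w v : ℝ → ℝ} (hw : IntegrableOn w (Set.Ici 0) volume)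
    (hv : AEStronglyMeasurable v (volume.restrict (Set.Ici 0)))
    (h : ∀ᵐ x : ℝ, 0 ≤ x → 0 ≤ v x ∧ v x ≤ w x) : IntegrableOn v (Set.Ici 0) volume := by
  refine Integrable.mono' hw hv ?_
  rw [ae_restrict_iff' measurableSet_Ici]
  filter_upwards [h] with x hx hx0
  rw [Real.norm_eq_abs, abs_of_nonneg (hx hx0).1]
  exact (hx hx0).2

/-- If `q` satisfies condition A for `x ≥ 0`, then every `y` in the maximal
domain (`y, y'` locally absolutely continuous, `y ∈ L₂(ℝ₊)`,
`-y'' + q y ∈ L₂(ℝ₊)`) satisfies `y ∈ L₂(ℝ₊, ρ)` and `y' ∈ L₂(ℝ₊, ρ/|q|)`. -/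
theorem statement19 (q q' : ℝ → ℂ) (C : ℝ) (hA : CondA q q' 0 C)
    (y y' y'' : ℝ → ℂ) (hy : LocACOn y y' 0) (hy' : LocACOn y' y'' 0)
    (hyL2 : MemL2 (fun _ => 1) y)
    (hfL2 : MemL2 (fun _ => 1) (fun x => -y'' x + q x * y x)) :
    IntegrableOn (fun x => rho q q' x * ‖y x‖ ^ 2) (Set.Ici (0:ℝ)) volume ∧
    IntegrableOn (fun x => rho q q' x / ‖q x‖ * ‖y' x‖ ^ 2)
      (Set.Ici (0:ℝ)) volume := by
  obtain ⟨-, hq, ⟨κ, hκ, hsec⟩, hre, hC, hrho⟩ := hA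
  have hslit : ∀ x, 0 ≤ x → q x ∈ slitPlane := fun x hx => by
    obtain ⟨h0, -, h2⟩ := hsec x hx
    exact mem_slitPlane_iff_arg.2 ⟨by linarith, h0⟩
  have hpc : ContinuousOn (sqrtQ q) (Set.Ici 0) :=
    hq.continuousOn.cpow continuousOn_const hslit
  have hp0 : ∀ x, 0 ≤ x → sqrtQ q x ≠ 0 := fun x hx h => by
    have := hre x hx; rw [h] at this; simp at this
  have hq0 : ∀ x, 0 ≤ x → q x ≠ 0 := fun x hx => slitPlane_ne_zero (hslit x hx)
  set w : ℝ → ℝ := fun x => rho q q' x * (‖y x‖ ^ 2 + ‖y' x‖ ^ 2 / ‖q x‖) with hw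
  set e : ℝ → ℝ := fun x => 1 / (2 * C) * (‖-y'' x + q x * y x‖ ^ 2 + ‖y x‖ ^ 2) with he
  set g : ℝ → ℝ := fun x => (y' x * (sqrtQ q x)⁻¹ * star (y x)).re with hg
  have hyc := hy.continuousOn
  have hy'c := hy'.continuousOn
  have hrhoI : ∀ b, 0 ≤ b → IntervalIntegrable (rho q q') volume 0 b := by
    intro b hb
    have hsub : Set.uIcc 0 b ⊆ Set.Ici 0 := by
      rw [Set.uIcc_of_le hb]; exact fun t ht => ht.1
    have h1 : IntervalIntegrable (fun x => (sqrtQ q x).re) volume 0 b :=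
      (Complex.continuous_re.comp_continuousOn (hpc.mono hsub)).intervalIntegrable
    have h2 : IntervalIntegrable (fun x => q' x * (2 * sqrtQ q x * sqrtQ q x)⁻¹) volume 0 b := by
      refine (hq.1 b hb).mul_continuousOn ?_
      refine ((continuousOn_const.mul (hpc.mono hsub)).mul (hpc.mono hsub)).inv₀ fun x hx => ?_
      have := hp0 x (hsub hx)
      exact mul_ne_zero (mul_ne_zero two_ne_zero this) this
    refine (h1.sub (h2.norm.const_mul (1 / 2))).congr fun x _ => ?_
    simp only [rho, sqrtQD, div_eq_mul_inv, mul_inv, mul_assoc]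
  have hyqc : ContinuousOn (fun x => ‖y x‖ ^ 2 + ‖y' x‖ ^ 2 / ‖q x‖) (Set.Ici 0) :=
    (hyc.norm.pow 2).add ((hy'c.norm.pow 2).div hq.continuousOn.norm
      fun x hx => norm_ne_zero_iff.2 (hq0 x hx))
  have hwI : ∀ b, 0 ≤ b → IntervalIntegrable w volume 0 b := fun b hb =>
    (hrhoI b hb).mul_continuousOn (hyqc.mono (by
      rw [Set.uIcc_of_le hb]; exact fun t ht => ht.1))
  have heI : IntegrableOn e (Set.Ici 0) volume := by
    have h1 := hfL2.2
    have h2 := hyL2.2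
    simp only [one_mul] at h1 h2
    exact (h1.add h2).const_mul _
  have he0 : ∀ x, 0 ≤ e x := fun x => by simp only [he]; positivity
  have hrhoC : ∀ᵐ x : ℝ, 0 ≤ x → C ≤ rho q q' x := by
    filter_upwards [hrho] with x hx hx0
    have := hx hx0
    unfold rho; linarith
  have hgac : ∀ b, 0 ≤ b → AbsolutelyContinuousOnInterval g 0 b := by
    intro b hb
    have hr := ac_inv (ac_sqrtQ hq hpc hre hb) fun x hx => by
      rw [Set.uIcc_of_le hb] at hx; exact hp0 x hx.1
    have hs : AbsolutelyContinuousOnInterval (fun x => star (y x)) 0 b :=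
      ac_of_dist_le (K := 1) (hy.ac hb) fun s _ t _ => by
        rw [dist_eq_norm, dist_eq_norm, ← star_sub, norm_star, one_mul]
    refine ac_of_dist_le (K := 1) (((hy'.ac hb).fun_smul hr).fun_smul hs) fun s _ t _ => ?_
    rw [Real.dist_eq, one_mul, dist_eq_norm, ← sub_re]
    exact Complex.abs_re_le_norm _
  -- Integrating the energy inequality bounds `∫₀ˣ w` by `g(x) - g(0) + ∫ e`.
  have hupper : ∀ X, 0 ≤ X → ∫ x in (0:ℝ)..X, w x ≤ g X - g 0 + ∫ x in Set.Ici (0:ℝ), e x := by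
    intro X hX
    have hei : IntervalIntegrable e volume 0 X := by
      rw [intervalIntegrable_iff_integrableOn_Ioc_of_le hX]
      exact heI.mono_set fun t ht => ht.1.le
    have hdi := (hgac X hX).intervalIntegrable_deriv
    have hle : ∫ x in (0:ℝ)..X, w x ≤ ∫ x in (0:ℝ)..X, (deriv g x + e x) := by
      refine intervalIntegral.integral_mono_ae_restrict hX (hwI X hX) (hdi.add hei) ?_
      rw [← Measure.restrict_congr_set Ioo_ae_eq_Icc, Filter.EventuallyLE,
        ae_restrict_iff' measurableSet_Ioo]
      filter_upwards [hq.ae_hasDerivAt hX, hy.ae_hasDerivAt hX, hy'.ae_hasDerivAt hX, hrho]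
        with x hqx hyx hy'x hrx hx
      have hx0 : 0 ≤ x := hx.1.le
      have hd := ((hy'x hx).fun_mul ((hasDerivAt_sqrtQ (hslit x hx0) (hqx hx)).fun_inv
        (hp0 x hx0))).fun_mul (hyx hx).star
      have hdg : HasDerivAt g _ x := Complex.reCLM.hasFDerivAt.comp_hasDerivAt x hd
      rw [hdg.deriv]
      have hCp : C ≤ (sqrtQ q x).re :=
        le_trans (le_add_of_nonneg_right (by positivity)) (hrx hx0)
      have := energy_ineq hC (d := sqrtQD q q' x) (a := y x) (a' := y' x) (a'' := y'' x) hCp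
      rw [sqrtQ_sq] at this
      simpa only [hw, he, rho, reCLM_apply, sqrtQ_sq] using this
    rw [intervalIntegral.integral_add hdi hei, (hgac X hX).integral_deriv_eq_sub] at hle
    have : ∫ x in (0:ℝ)..X, e x ≤ ∫ x in Set.Ici (0:ℝ), e x := by
      rw [intervalIntegral.integral_of_le hX]
      exact setIntegral_mono_set heI (Eventually.of_forall he0)
        (LE.le.eventuallyLE fun t (ht : t ∈ Set.Ioc 0 X) => ht.1.le)
    linarith
  set K := -g 0 + ∫ x in Set.Ici (0:ℝ), e x with hK
  have hw0 : ∀ᵐ x : ℝ, 0 ≤ x → 0 ≤ w x := by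
    filter_upwards [hrhoC] with x hx hx0
    exact mul_nonneg (hC.le.trans (hx hx0)) (by positivity)
  -- `C J² ≤ |y|² w` follows from `J ≤ |y| |z|` and `w ≥ ρ |z|² ≥ C |z|²`.
  have hbound : ∀ X, 0 ≤ X → ∫ t in (0:ℝ)..X, w t ≤ K := by
    have hu : IntegrableOn (fun x => ‖y x‖ ^ 2) (Set.Ici 0) volume := by
      simpa only [one_mul] using hyL2.2
    refine integral_le_of_riccati hC hwI hw0 hu (fun x => by positivity) ?_
    filter_upwards [hrhoC] with x hx hx0 hpos
    set J := (∫ t in (0:ℝ)..x, w t) - K with hJ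
    have hJg : J ≤ g x := by have := hupper x hx0; simp only [hJ, hK]; linarith
    have hgn : g x ≤ ‖y' x‖ / ‖sqrtQ q x‖ * ‖y x‖ := by
      refine (Complex.re_le_norm _).trans ?_
      rw [norm_mul, norm_mul, norm_star, norm_inv, div_eq_mul_inv]
    have hJ2 : J ^ 2 ≤ ‖y' x‖ ^ 2 / ‖q x‖ * ‖y x‖ ^ 2 := by
      have := pow_le_pow_left₀ hpos.le (hJg.trans hgn) 2
      rwa [mul_pow, div_pow, ← norm_pow, ← norm_pow, ← norm_pow, sqrtQ_sq, norm_pow, norm_pow]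
        at this
    have hz : 0 ≤ ‖y' x‖ ^ 2 / ‖q x‖ := by positivity
    calc C * J ^ 2 ≤ rho q q' x * (‖y' x‖ ^ 2 / ‖q x‖ * ‖y x‖ ^ 2) :=
          mul_le_mul (hx hx0) hJ2 (sq_nonneg _) (hC.le.trans (hx hx0))
      _ = ‖y x‖ ^ 2 * (rho q q' x * (‖y' x‖ ^ 2 / ‖q x‖)) := by ring
      _ ≤ ‖y x‖ ^ 2 * w x := by
          refine mul_le_mul_of_nonneg_left ?_ (by positivity)
          exact mul_le_mul_of_nonneg_left (le_add_of_nonneg_left (by positivity))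
            (hC.le.trans (hx hx0))
  have hwInt : IntegrableOn w (Set.Ici 0) volume := by
    rw [integrableOn_Ici_iff_integrableOn_Ioi]
    refine integrableOn_Ioi_of_intervalIntegral_norm_bounded K 0 (b := fun n : ℕ => (n : ℝ))
      (l := atTop) (fun n => ?_) tendsto_natCast_atTop_atTop (Eventually.of_forall fun n => ?_)
    · exact (intervalIntegrable_iff_integrableOn_Ioc_of_le n.cast_nonneg).1
        (hwI n n.cast_nonneg)
    · refine le_of_eq_of_le (intervalIntegral.integral_congr_ae ?_) (hbound n n.cast_nonneg)
      filter_upwards [hw0] with x hx hxm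
      rw [Set.uIoc_of_le n.cast_nonneg] at hxm
      rw [Real.norm_eq_abs, abs_of_nonneg (hx hxm.1.le)]
  have hrhoM : AEStronglyMeasurable (rho q q') (volume.restrict (Set.Ici 0)) := by
    have : LocallyIntegrableOn (rho q q') (Set.Ici 0) volume := by
      refine (locallyIntegrableOn_iff isClosed_Ici.isLocallyClosed).2 fun k hk hkc => ?_
      obtain ⟨B, hB⟩ := hkc.bddAbove
      refine ((intervalIntegrable_iff_integrableOn_Icc_of_le (le_max_right B 0)).1
        (hrhoI (max B 0) (le_max_right _ _))).mono_set fun t ht => ?_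
      exact ⟨hk ht, (hB ht).trans (le_max_left _ _)⟩
    exact this.aestronglyMeasurable
  have hqM := hq.continuousOn.norm.aestronglyMeasurable (μ := volume) measurableSet_Ici
  have hyM := (hyc.norm.pow 2).aestronglyMeasurable (μ := volume) measurableSet_Ici
  have hy'M := (hy'c.norm.pow 2).aestronglyMeasurable (μ := volume) measurableSet_Ici
  constructor
  · refine integrableOn_of_dominated hwInt (hrhoM.mul hyM) ?_
    filter_upwards [hrhoC] with x hx hx0
    have hr := hC.le.trans (hx hx0)
    exact ⟨by positivity, mul_le_mul_of_nonneg_left (le_add_of_nonneg_right (by positivity)) hr⟩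
  · refine integrableOn_of_dominated hwInt
      ((hrhoM.aemeasurable.div hqM.aemeasurable).aestronglyMeasurable.mul hy'M) ?_
    filter_upwards [hrhoC] with x hx hx0
    have hr := hC.le.trans (hx hx0)
    refine ⟨by positivity, ?_⟩
    rw [div_mul_eq_mul_div, mul_div_assoc]
    exact mul_le_mul_of_nonneg_left (le_add_of_nonneg_left (by positivity)) hr
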